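/- arXiv:2502.04146 — 4 statements merged into one kernel-verified Lean document; each statement's English description precedes it below -/
import Mathlib

section
/- Let (U, φ) be a finite standard closure space whose closure lattice is geometric. Then the E-base of (U, φ) is valid if and only if the essential closed sets of (U, φ) are pairwise incomparable with respect to inclusion. -/
namespace EBaseFormal

open Set

variable {α : Type*}

/-- `φ` is a closure operator on subsets of `α`. -/
def IsClosureOp (φ : Set α → Set α) : Prop :=
  (∀ X, X ⊆ φ X) ∧ (∀ X, φ (φ X) = φ X) ∧ ∀ X Y : Set α, X ⊆ Y → φ X ⊆ φ Y

/-- `C` is a closed set of the closure space. -/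
def IsClosedSet (φ : Set α → Set α) (C : Set α) : Prop :=
  φ C = C

/-- The closure space is standard: `φ {x} \ {x}` is closed for every `x`. -/
def IsStandard (φ : Set α → Set α) : Prop :=
  ∀ x : α, IsClosedSet φ (φ {x} \ {x})

/-- The binary part `φ^b` of the closure operator. -/
def binPart (φ : Set α → Set α) (X : Set α) : Set α :=
  ⋃ x ∈ X, φ {x}

/-- `A` is a D-generator of `x`. -/
def IsDGen (φ : Set α → Set α) (x : α) (A : Set α) : Prop :=
  x ∈ φ A ∧ x ∉ binPart φ A ∧ ∀ B : Set α, binPart φ B ⊂ binPart φ A → x ∉ φ B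

/-- `A` is an E-generator of `x`: a D-generator whose closure is inclusion-minimal
among the closures of D-generators of `x`. -/
def IsEGen (φ : Set α → Set α) (x : α) (A : Set α) : Prop :=
  IsDGen φ x A ∧ ∀ B : Set α, IsDGen φ x B → φ B ⊆ φ A → φ B = φ A

/-- The E-base of the closure space: all valid nontrivial binary implications
together with the implications `A → {x}` for `A` an E-generator of `x`. -/
def EBase (φ : Set α → Set α) : Set (Set α × Set α) :=
  {p | ∃ a x : α, p = ({a}, {x}) ∧ x ∈ φ {a} ∧ x ≠ a} ∪
    {p | ∃ (x : α) (A : Set α), p = (A, {x}) ∧ IsEGen φ x A}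

/-- `Y` satisfies all implications of `S`. -/
def ImpClosedSet (S : Set (Set α × Set α)) (Y : Set α) : Prop :=
  ∀ p ∈ S, p.1 ⊆ Y → p.2 ⊆ Y

/-- The closure of `Z` under the implications in `S`: the smallest set containing
`Z` satisfying all implications of `S`. -/
def ImpClosure (S : Set (Set α × Set α)) (Z : Set α) : Set α :=
  ⋂₀ {Y : Set α | Z ⊆ Y ∧ ImpClosedSet S Y}

/-- The E-base is valid: its induced closure operator is `φ`. -/
def EBaseValid (φ : Set α → Set α) : Prop :=
  ∀ Z : Set α, ImpClosure (EBase φ) Z = φ Z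

/-- `Q` is quasi-closed. -/
def QuasiClosed (φ : Set α → Set α) (Q : Set α) : Prop :=
  ∀ X ⊆ Q, φ X ⊂ φ Q → φ X ⊆ Q

/-- `P` is pseudo-closed: non-closed and inclusion-minimal among the quasi-closed
sets spanning `φ P`. -/
def PseudoClosed (φ : Set α → Set α) (P : Set α) : Prop :=
  ¬ IsClosedSet φ P ∧ QuasiClosed φ P ∧
    ∀ Q : Set α, QuasiClosed φ Q → φ Q = φ P → Q ⊆ P → Q = P

/-- `C` is an essential closed set. -/
def Essential (φ : Set α → Set α) (C : Set α) : Prop :=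
  IsClosedSet φ C ∧ ∃ P : Set α, PseudoClosed φ P ∧ φ P = C

/-- The canonical (Duquenne–Guigues) base. -/
def DGBase (φ : Set α → Set α) : Set (Set α × Set α) :=
  {p | ∃ P : Set α, PseudoClosed φ P ∧ p = (P, φ P \ P)}

/-- `C'` is a predecessor (lower cover) of `C` in the closure lattice. -/
def Predecessor (φ : Set α → Set α) (C' C : Set α) : Prop :=
  IsClosedSet φ C' ∧ IsClosedSet φ C ∧ C' ⊂ C ∧
    ∀ C'' : Set α, IsClosedSet φ C'' → C' ⊂ C'' → C'' ⊆ C → C'' = C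

/-- The closure lattice is join-semidistributive. -/
def JoinSemidistrib (φ : Set α → Set α) : Prop :=
  ∀ C1 C2 C3 : Set α, IsClosedSet φ C1 → IsClosedSet φ C2 → IsClosedSet φ C3 →
    φ (C1 ∪ C2) = φ (C1 ∪ C3) → φ (C1 ∪ C2) = φ (C1 ∪ C2 ∩ C3)

/-- The closure lattice is meet-semidistributive. -/
def MeetSemidistrib (φ : Set α → Set α) : Prop :=
  ∀ C1 C2 C3 : Set α, IsClosedSet φ C1 → IsClosedSet φ C2 → IsClosedSet φ C3 →
    C1 ∩ C2 = C1 ∩ C3 → C1 ∩ C2 = C1 ∩ φ (C2 ∪ C3)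

/-- The closure lattice is semidistributive. -/
def Semidistrib (φ : Set α → Set α) : Prop :=
  JoinSemidistrib φ ∧ MeetSemidistrib φ

/-- The closure lattice is modular: `a ≤ b → (b ∧ c) ∨ a = b ∧ (c ∨ a)`. -/
def ModularLattice (φ : Set α → Set α) : Prop :=
  ∀ A B C : Set α, IsClosedSet φ A → IsClosedSet φ B → IsClosedSet φ C →
    A ⊆ B → φ (B ∩ C ∪ A) = B ∩ φ (C ∪ A)

/-- The closure lattice is atomistic (in a standard space). -/
def Atomistic (φ : Set α → Set α) : Prop :=
  ∀ x : α, φ {x} = ({x} : Set α)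

/-- The closure lattice is upper-semimodular. -/
def UpperSemimodular (φ : Set α → Set α) : Prop :=
  ∀ C1 C2 : Set α, IsClosedSet φ C1 → IsClosedSet φ C2 →
    Predecessor φ (C1 ∩ C2) C1 → Predecessor φ C2 (φ (C1 ∪ C2))

/-- The closure lattice is geometric: atomistic and upper-semimodular. -/
def Geometric (φ : Set α → Set α) : Prop :=
  Atomistic φ ∧ UpperSemimodular φ

/-- `x` is prime in the lattice `(↓C, ⊆)` of closed subsets of `C`. -/
def PrimeIn (φ : Set α → Set α) (C : Set α) (x : α) : Prop :=
  ∀ C1 C2 : Set α, IsClosedSet φ C1 → IsClosedSet φ C2 → C1 ⊆ C → C2 ⊆ C →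
    φ {x} ⊆ φ (C1 ∪ C2) → φ {x} ⊆ C1 ∨ φ {x} ⊆ C2

/-- `x ∈ C` is almost prime in `(↓C, ⊆)`. -/
def AlmostPrimeIn (φ : Set α → Set α) (C : Set α) (x : α) : Prop :=
  x ∈ C ∧ ¬ PrimeIn φ C x ∧
    ∀ C' : Set α, Predecessor φ C' C → x ∈ C' → PrimeIn φ C' x

/-- `A` is a `φ^b`-minimal spanning set of the closed set `C`. -/
def BMinSpanning (φ : Set α → Set α) (C A : Set α) : Prop :=
  φ A = C ∧ ∀ B : Set α, binPart φ B ⊂ binPart φ A → φ B ≠ C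

/-- `C` is join-irreducible: nonempty and whenever it is a join of two closed sets
it equals one of them. -/
def JoinIrred (φ : Set α → Set α) (C : Set α) : Prop :=
  IsClosedSet φ C ∧ C ≠ ∅ ∧
    ∀ C1 C2 : Set α, IsClosedSet φ C1 → IsClosedSet φ C2 →
      C = φ (C1 ∪ C2) → C = C1 ∨ C = C2

/-- `C` is join-irreducible: nonempty with a unique predecessor. -/
def JoinIrredUP (φ : Set α → Set α) (C : Set α) : Prop :=
  IsClosedSet φ C ∧ C ≠ ∅ ∧ ∃! C' : Set α, Predecessor φ C' C

/-!
In a geometric space, `A` is a D-generator of `x ∉ A` iff `insert x A` is a circuit, and the E-base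
is valid iff every set closed under the E-generators is closed.

Let the E-base be valid, let `Q` be quasi-closed but not closed, and let `C = φ Q`. Call a point of
`C` free if none of its D-generators spans a closed set strictly inside `C`. By exchange, an
E-generator spanning a proper part of `C` contains no free point, so adding the free points to a
set closed under proper spans gives a closed set. Applied to `Q`, this yields a free `x ∉ Q`;
applied to hyperplanes of `C` that miss a given point and also miss `x`, it shows that every
point of `C` is free. A strictly smaller essential set would contain a point that is not free.

Conversely, let the essential closed sets be incomparable. In a set `Y` that is not closed, some
`X ⊆ Y` has an essential closure not contained in `Y`. Since a D-generator is not closed, its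
closure contains an essential set; hence a D-generator `A ⊆ X` of a point of `φ X \ Y` is an
E-generator, and `Y` violates an implication of the E-base.
-/

section

variable {φ : Set α → Set α} {A C Q R X Y : Set α} {a n x y : α}

theorem IsClosureOp.subset_closure (hφ : IsClosureOp φ) : X ⊆ φ X :=
  hφ.1 X

theorem IsClosureOp.isClosedSet_closure (hφ : IsClosureOp φ) : IsClosedSet φ (φ X) :=
  hφ.2.1 X

theorem IsClosureOp.closure_mono (hφ : IsClosureOp φ) (h : X ⊆ Y) : φ X ⊆ φ Y :=
  hφ.2.2 X Y h

theorem IsClosureOp.closure_minimal (hφ : IsClosureOp φ) (h : X ⊆ C) (hC : IsClosedSet φ C) :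
    φ X ⊆ C :=
  (hφ.closure_mono h).trans hC.subset

theorem IsClosureOp.isClosedSet_iff_closure_subset (hφ : IsClosureOp φ) :
    IsClosedSet φ C ↔ φ C ⊆ C :=
  ⟨Eq.subset, fun h ↦ h.antisymm hφ.subset_closure⟩

theorem IsClosureOp.exists_mem_closure_notMem (hφ : IsClosureOp φ) (hX : ¬ IsClosedSet φ X) :
    ∃ x ∈ φ X, x ∉ X :=
  not_subset.1 (mt hφ.isClosedSet_iff_closure_subset.2 hX)

theorem IsClosureOp.isClosedSet_inter (hφ : IsClosureOp φ) (hX : IsClosedSet φ X)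
    (hY : IsClosedSet φ Y) : IsClosedSet φ (X ∩ Y) :=
  hφ.isClosedSet_iff_closure_subset.2 <|
    subset_inter (hφ.closure_minimal inter_subset_left hX)
      (hφ.closure_minimal inter_subset_right hY)

/-- The Mac Lane–Steinitz exchange property, which for atomistic closure spaces is the
elementwise form of upper semimodularity. -/
def ExchangeProperty (φ : Set α → Set α) : Prop :=
  ∀ ⦃X : Set α⦄ ⦃x y : α⦄, y ∈ φ (insert x X) → y ∉ φ X → x ∈ φ (insert y X)

theorem IsClosureOp.predecessor_singleton_inter (hφ : IsClosureOp φ) (hat : Atomistic φ)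
    (hC : IsClosedSet φ C) (hx : x ∉ C) : Predecessor φ ({x} ∩ C) {x} := by
  refine ⟨hφ.isClosedSet_inter (hat x) hC, hat x,
    inter_subset_left.ssubset_of_not_subset fun h ↦ hx (h rfl).2, fun D _ hD hDx ↦ ?_⟩
  exact (subset_singleton_iff_eq.1 hDx).resolve_left ((empty_subset _).trans_ssubset hD).ne'

theorem Geometric.exchangeProperty (hφ : IsClosureOp φ) (hgeo : Geometric φ) :
    ExchangeProperty φ := by
  intro X x y hy hyX
  have hx : x ∉ φ X := fun hx ↦ hyX <|
    hφ.closure_minimal (insert_subset hx hφ.subset_closure) hφ.isClosedSet_closure hy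
  have hcover : Predecessor φ (φ X) (φ ({x} ∪ φ X)) :=
    hgeo.2 {x} (φ X) (hgeo.1 x) hφ.isClosedSet_closure
      (hφ.predecessor_singleton_inter hgeo.1 hφ.isClosedSet_closure hx)
  have hXx : insert x X ⊆ {x} ∪ φ X := insert_subset_insert hφ.subset_closure
  have hlt : φ X ⊂ φ (insert y X) :=
    (hφ.closure_mono (subset_insert y X)).ssubset_of_not_subset
      fun h ↦ hyX (h (hφ.subset_closure (mem_insert y X)))
  have hle : φ (insert y X) ⊆ φ ({x} ∪ φ X) :=
    hφ.closure_minimal (insert_subset (hφ.closure_mono hXx hy)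
      (((subset_insert x X).trans hXx).trans hφ.subset_closure)) hφ.isClosedSet_closure
  rw [hcover.2.2.2 _ hφ.isClosedSet_closure hlt hle]
  exact hφ.subset_closure (mem_union_left _ rfl)

theorem ExchangeProperty.mem_closure_insert_sdiff_singleton (hex : ExchangeProperty φ)
    (hA : Minimal (x ∈ φ ·) A) (ha : a ∈ A) : a ∈ φ (insert x (A \ {a})) := by
  apply hex
  · rw [insert_sdiff_self_of_mem ha]
    exact hA.prop
  · exact hA.not_prop_of_ssubset (sdiff_singleton_ssubset.2 ha)

/-- Independence in the sense of matroid theory: no element of `A` is in the closure of the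
others. -/
def Independent (φ : Set α → Set α) (A : Set α) : Prop :=
  ∀ a ∈ A, a ∉ φ (A \ {a})

theorem IsClosureOp.independent_of_minimal (hφ : IsClosureOp φ) (hA : Minimal (x ∈ φ ·) A) :
    Independent φ A := by
  intro a ha hmem
  have hsub : A ⊆ φ (A \ {a}) :=
    (insert_sdiff_self_of_mem ha).superset.trans (insert_subset hmem hφ.subset_closure)
  exact hA.not_prop_of_ssubset (sdiff_singleton_ssubset.2 ha)
    (hφ.closure_minimal hsub hφ.isClosedSet_closure hA.prop)

theorem Independent.exists_notMem_closure_sdiff_singleton [Finite α] (hφ : IsClosureOp φ)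
    (hex : ExchangeProperty φ) (hA : Independent φ A) (hn : n ∈ φ A) (hn0 : n ∉ φ ∅) :
    ∃ a ∈ A, n ∉ φ (A \ {a}) := by
  obtain ⟨B, hBA, hB⟩ := exists_minimal_le_of_wellFoundedLT (n ∈ φ ·) A hn
  obtain ⟨a, ha⟩ : B.Nonempty := by
    by_contra! hempty
    exact hn0 (hempty ▸ hB.prop)
  refine ⟨a, hBA ha, fun hna ↦ hA a (hBA ha) ?_⟩
  have hsub : insert n (B \ {a}) ⊆ φ (A \ {a}) :=
    insert_subset hna ((sdiff_subset_sdiff_left hBA).trans hφ.subset_closure)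
  exact hφ.closure_minimal hsub hφ.isClosedSet_closure
    (hex.mem_closure_insert_sdiff_singleton hB ha)

theorem Atomistic.binPart_eq (hat : Atomistic φ) (X : Set α) : binPart φ X = X := by
  simp [binPart, hat _]

theorem Atomistic.isDGen_iff_minimal (hat : Atomistic φ) :
    IsDGen φ x A ↔ Minimal (x ∈ φ ·) A ∧ x ∉ A := by
  simp only [IsDGen, hat.binPart_eq, minimal_iff_forall_ssubset]
  tauto

theorem Atomistic.exists_isDGen [Finite α] (hat : Atomistic φ) (hx : x ∈ φ X) (hxX : x ∉ X) :
    ∃ A ⊆ X, IsDGen φ x A := by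
  obtain ⟨A, hAX, hA⟩ := exists_minimal_le_of_wellFoundedLT (x ∈ φ ·) X hx
  exact ⟨A, hAX, hat.isDGen_iff_minimal.2 ⟨hA, fun h ↦ hxX (hAX h)⟩⟩

theorem IsDGen.exists_isDGen_of_mem [Finite α] (hφ : IsClosureOp φ) (hat : Atomistic φ)
    (hex : ExchangeProperty φ) (hA : IsDGen φ x A) (ha : a ∈ A) :
    ∃ B, IsDGen φ a B ∧ φ B ⊆ φ A := by
  obtain ⟨hmin, hxA⟩ := hat.isDGen_iff_minimal.1 hA
  obtain ⟨B, hBA, hB⟩ := hat.exists_isDGen (hex.mem_closure_insert_sdiff_singleton hmin ha)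
    (by simpa using ne_of_mem_of_not_mem ha hxA)
  have hsub : insert x (A \ {a}) ⊆ φ A :=
    insert_subset hmin.prop (sdiff_subset.trans hφ.subset_closure)
  exact ⟨B, hB, hφ.closure_minimal (hBA.trans hsub) hφ.isClosedSet_closure⟩

theorem IsClosureOp.impClosedSet_eBase (hφ : IsClosureOp φ) (hC : IsClosedSet φ C) :
    ImpClosedSet (EBase φ) C := by
  rintro _ (⟨a, x, rfl, hx, -⟩ | ⟨x, A, rfl, hA⟩) hp
  · exact singleton_subset_iff.2 (hφ.closure_minimal hp hC hx)
  · exact singleton_subset_iff.2 (hφ.closure_minimal hp hC hA.1.1)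

theorem IsClosureOp.eBaseValid_iff (hφ : IsClosureOp φ) :
    EBaseValid φ ↔ ∀ Y, ImpClosedSet (EBase φ) Y → IsClosedSet φ Y := by
  refine ⟨fun hv Y hY ↦ ?_, fun h Z ↦ Subset.antisymm ?_ ?_⟩
  · rw [hφ.isClosedSet_iff_closure_subset, ← hv Y]
    exact sInter_subset_of_mem ⟨subset_rfl, hY⟩
  · exact sInter_subset_of_mem
      ⟨hφ.subset_closure, hφ.impClosedSet_eBase hφ.isClosedSet_closure⟩
  · exact subset_sInter fun Y hY ↦ hφ.closure_minimal hY.1 (h Y hY.2)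

theorem Atomistic.impClosedSet_eBase_iff (hat : Atomistic φ) :
    ImpClosedSet (EBase φ) Y ↔ ∀ x A, IsEGen φ x A → A ⊆ Y → x ∈ Y := by
  refine ⟨fun hY x A hA hAY ↦ hY (A, {x}) (Or.inr ⟨x, A, rfl, hA⟩) hAY rfl, ?_⟩
  rintro h _ (⟨a, x, rfl, hx, hne⟩ | ⟨x, A, rfl, hA⟩) hp
  · rw [hat a] at hx
    exact absurd hx hne
  · exact singleton_subset_iff.2 (h x A hA hp)

/-- The elements of `C` that are not implied by a proper part of `C`: none of their D-generators
spans a closed set strictly inside `C`. -/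
def freePart (φ : Set α → Set α) (C : Set α) : Set α :=
  {y ∈ C | ∀ B, IsDGen φ y B → ¬ φ B ⊂ C}

theorem EBaseValid.isClosedSet_union_freePart [Finite α] (hv : EBaseValid φ)
    (hφ : IsClosureOp φ) (hat : Atomistic φ) (hex : ExchangeProperty φ) (hC : IsClosedSet φ C)
    (hRC : R ⊆ C) (hR : ∀ X ⊆ R, φ X ⊂ C → φ X ⊆ R) : IsClosedSet φ (R ∪ freePart φ C) := by
  refine hφ.eBaseValid_iff.1 hv _ (hat.impClosedSet_eBase_iff.2 fun y A hA hAR ↦ ?_)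
  have hAC : φ A ⊆ C := hφ.closure_minimal (hAR.trans (union_subset hRC (sep_subset _ _))) hC
  by_cases hfree : y ∈ freePart φ C
  · exact Or.inr hfree
  obtain ⟨B, hB, hBC⟩ : ∃ B, IsDGen φ y B ∧ φ B ⊂ C := by
    by_contra! h
    exact hfree ⟨hAC hA.1.1, h⟩
  have hlt : φ A ⊂ C := by
    refine hAC.ssubset_of_ne fun hAeq ↦ hBC.ne ?_
    rw [hA.2 B hB (hAeq ▸ hBC.subset), hAeq]
  have hAsub : A ⊆ R := by
    refine fun a ha ↦ (hAR ha).resolve_right fun hfree ↦ ?_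
    obtain ⟨B', hB', hB'A⟩ := hA.1.exists_isDGen_of_mem hφ hat hex ha
    exact hfree.2 B' hB' (hB'A.trans_ssubset hlt)
  exact Or.inl (hR A hAsub hlt hA.1.1)

theorem EBaseValid.closure_sdiff_subset_freePart [Finite α] (hv : EBaseValid φ)
    (hφ : IsClosureOp φ) (hat : Atomistic φ) (hex : ExchangeProperty φ) (hQ : QuasiClosed φ Q) :
    φ Q \ Q ⊆ freePart φ (φ Q) := by
  have hclosed : IsClosedSet φ (Q ∪ freePart φ (φ Q)) :=
    hv.isClosedSet_union_freePart hφ hat hex hφ.isClosedSet_closure hφ.subset_closure hQ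
  rw [sdiff_subset_iff]
  exact hφ.closure_minimal subset_union_left hclosed

theorem EBaseValid.closure_subset_freePart [Finite α] (hv : EBaseValid φ)
    (hφ : IsClosureOp φ) (hat : Atomistic φ) (hex : ExchangeProperty φ) (hQ : QuasiClosed φ Q)
    (hnc : ¬ IsClosedSet φ Q) : φ Q ⊆ freePart φ (φ Q) := by
  intro n hn
  obtain ⟨x, hx, hxQ⟩ := hφ.exists_mem_closure_notMem hnc
  have hxF : x ∈ freePart φ (φ Q) := hv.closure_sdiff_subset_freePart hφ hat hex hQ ⟨hx, hxQ⟩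
  obtain rfl | hnx := eq_or_ne n x
  · exact hxF
  obtain ⟨A, hAQ, hA⟩ := hat.exists_isDGen hx hxQ
  have hAeq : φ A = φ Q := by
    by_contra hne
    exact hxF.2 A hA ((hφ.closure_mono hAQ).ssubset_of_ne hne)
  have hmin : Minimal (x ∈ φ ·) A := (hat.isDGen_iff_minimal.1 hA).1
  have hn0 : n ∉ φ ∅ := fun h ↦
    hnx ((hat x).subset (hφ.closure_mono (empty_subset {x}) h))
  obtain ⟨a, ha, hna⟩ := (hφ.independent_of_minimal hmin).exists_notMem_closure_sdiff_singleton
    hφ hex (hAeq ▸ hn) hn0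
  -- `φ (A \ {a})` is a hyperplane of `φ Q` missing `n`; with the free element `x` it spans `φ Q`.
  have hclosed : IsClosedSet φ (φ (A \ {a}) ∪ freePart φ (φ Q)) :=
    hv.isClosedSet_union_freePart hφ hat hex hφ.isClosedSet_closure
      (hAeq ▸ hφ.closure_mono sdiff_subset)
      fun X hX _ ↦ hφ.closure_minimal hX hφ.isClosedSet_closure
  have hdiff : A \ {a} ⊆ φ (A \ {a}) ∪ freePart φ (φ Q) :=
    hφ.subset_closure.trans subset_union_left
  have ha' : a ∈ φ (A \ {a}) ∪ freePart φ (φ Q) :=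
    hφ.closure_minimal (insert_subset (Or.inr hxF) hdiff) hclosed
      (hex.mem_closure_insert_sdiff_singleton hmin ha)
  have hspan : φ A ⊆ φ (A \ {a}) ∪ freePart φ (φ Q) :=
    hφ.closure_minimal ((insert_sdiff_self_of_mem ha).superset.trans (insert_subset ha' hdiff))
      hclosed
  exact (hspan (hAeq ▸ hn)).resolve_left hna

theorem EBaseValid.eq_of_essential_of_subset [Finite α] (hv : EBaseValid φ)
    (hφ : IsClosureOp φ) (hat : Atomistic φ) (hex : ExchangeProperty φ) {C₁ C₂ : Set α}
    (h₁ : Essential φ C₁) (h₂ : Essential φ C₂) (h : C₁ ⊆ C₂) : C₁ = C₂ := by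
  obtain ⟨-, P, hP, rfl⟩ := h₁
  obtain ⟨-, Q, hQ, rfl⟩ := h₂
  obtain ⟨x, hx, hxP⟩ := hφ.exists_mem_closure_notMem hP.1
  obtain ⟨A, hAP, hA⟩ := hat.exists_isDGen hx hxP
  have hx_free : x ∈ freePart φ (φ Q) :=
    hv.closure_subset_freePart hφ hat hex hQ.2.1 hQ.1 (h hx)
  by_contra hne
  exact hx_free.2 A hA ((hφ.closure_mono hAP).trans_ssubset (h.ssubset_of_ne hne))

theorem QuasiClosed.essential_closure [Finite α] (hφ : IsClosureOp φ) (hQ : QuasiClosed φ Q)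
    (hnc : ¬ IsClosedSet φ Q) : Essential φ (φ Q) := by
  obtain ⟨P, hPQ, hP⟩ := exists_minimal_le_of_wellFoundedLT
    (fun P ↦ QuasiClosed φ P ∧ φ P = φ Q) Q ⟨hQ, rfl⟩
  obtain ⟨hPquasi, hPeq⟩ := hP.prop
  refine ⟨hφ.isClosedSet_closure, P, ⟨fun hPclosed ↦ hnc ?_, hPquasi, ?_⟩, hPeq⟩
  · rw [hφ.isClosedSet_iff_closure_subset, ← hPeq, hPclosed]
    exact hPQ
  · exact fun R hR hReq hRP ↦ hP.eq_of_subset ⟨hR, hReq.trans hPeq⟩ hRP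

theorem IsClosureOp.exists_essential_closure_not_subset [Finite α] (hφ : IsClosureOp φ)
    (hY : ¬ IsClosedSet φ Y) : ∃ X ⊆ Y, Essential φ (φ X) ∧ ¬ φ X ⊆ Y := by
  obtain ⟨X, ⟨hXY, hX⟩, hmin⟩ := (toFinite {X | X ⊆ Y ∧ ¬ φ X ⊆ Y}).exists_minimalFor φ _
    ⟨Y, subset_rfl, mt hφ.isClosedSet_iff_closure_subset.2 hY⟩
  -- `X` itself need not be quasi-closed, but the trace of its closure on `Y` is.
  have hspan : φ (Y ∩ φ X) = φ X :=
    (hφ.closure_minimal inter_subset_right hφ.isClosedSet_closure).antisymm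
      (hφ.closure_mono (subset_inter hXY hφ.subset_closure))
  have hquasi : QuasiClosed φ (Y ∩ φ X) := by
    intro W hW hlt
    rw [hspan] at hlt
    refine subset_inter ?_ hlt.subset
    by_contra hWY
    exact hlt.not_subset (hmin ⟨hW.trans inter_subset_left, hWY⟩ hlt.subset)
  have hnc : ¬ IsClosedSet φ (Y ∩ φ X) :=
    fun hclosed ↦ hX (hspan ▸ hclosed.subset.trans inter_subset_left)
  exact ⟨Y ∩ φ X, inter_subset_left, hquasi.essential_closure hφ hnc,
    fun h ↦ hX (hspan.superset.trans h)⟩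

theorem Atomistic.eBaseValid_of_essential_incomparable [Finite α] (hat : Atomistic φ)
    (hφ : IsClosureOp φ)
    (hinc : ∀ C₁ C₂ : Set α, Essential φ C₁ → Essential φ C₂ → C₁ ⊆ C₂ → C₁ = C₂) :
    EBaseValid φ := by
  refine hφ.eBaseValid_iff.2 fun Y hY ↦ ?_
  by_contra hnc
  obtain ⟨X, hXY, hess, hX⟩ := hφ.exists_essential_closure_not_subset hnc
  obtain ⟨x, hx, hxY⟩ := not_subset.1 hX
  obtain ⟨A, hAX, hA⟩ := hat.exists_isDGen hx (notMem_subset hXY hxY)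
  have hE : IsEGen φ x A := by
    refine ⟨hA, fun B hB hBA ↦ hBA.antisymm ?_⟩
    have hBnc : ¬ IsClosedSet φ B :=
      fun hclosed ↦ (hat.isDGen_iff_minimal.1 hB).2 (hclosed.subset hB.1)
    obtain ⟨W, hWB, hWess, -⟩ := hφ.exists_essential_closure_not_subset hBnc
    have hWB' : φ W ⊆ φ B := hφ.closure_mono hWB
    have hAX' : φ A ⊆ φ X := hφ.closure_mono hAX
    rw [hinc _ _ hWess hess (hWB'.trans (hBA.trans hAX'))] at hWB'
    exact hAX'.trans hWB'
  exact hxY (hat.impClosedSet_eBase_iff.1 hY x A hE (hAX.trans hXY))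

end

/-- For a finite standard closure space with geometric closure lattice,
the E-base is valid iff the essential closed sets are pairwise incomparable. -/
theorem statement2 {α : Type*} [Fintype α] (φ : Set α → Set α)
    (hφ : IsClosureOp φ) (hstd : IsStandard φ) (hgeo : Geometric φ) :
    EBaseValid φ ↔
      ∀ C1 C2 : Set α, Essential φ C1 → Essential φ C2 → C1 ⊆ C2 → C1 = C2 :=
  ⟨fun hv _ _ ↦ hv.eq_of_essential_of_subset hφ hgeo.1 (hgeo.exchangeProperty hφ),
    hgeo.1.eBaseValid_of_essential_incomparable hφ⟩

end EBaseFormal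
end

section
/- Let (U, φ) be a finite standard closure space and x ∈ U. A set A ⊆ U is an E-generator of x if and only if the following three conditions hold: (1) A is a φ^b-minimal spanning set of φ(A); (2) x ∈ φ(A) and x ∉ φ^b(A); (3) for every closed set C with C ⊊ φ(A) and x ∈ C, the element x is prime in (↓C, ⊆). -/
/-!
The bridge is that, for a closed set `C` and `x ∉ φ ∅`, the element `x` is prime in `(↓C, ⊆)`
exactly when `x ∈ φ^b(B)` for every finite `B ⊆ C` with `x ∈ φ(B)`. Primality, applied while
splitting one element at a time off `B`, puts `x` in the closure of a single element; conversely,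
for `B ⊆ C₁ ∪ C₂` the single element lies in one of the two closed sets.

A set `B ⊆ C` with `x ∈ φ(B)` and `x ∉ φ^b(B)` can be refined to a D-generator of `x` with closure
inside `C`. Refinement of finite sets terminates because passing to the maximal principal closures
of the generators makes each proper refinement a step down in the Dershowitz–Manna order. So
condition (3) says that no D-generator of `x` has its closure strictly below `φ(A)`. The case
`x ∈ φ ∅` is harmless: then `x ∉ φ^b(A)` forces `A = ∅`, and nothing lies strictly below `φ(A)`.
-/

namespace EBaseFormal

open Set

variable {α : Type*}

section LowerClosure

variable {P : Type*} [PartialOrder P]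

theorem lowerClosure_maximal (S : Finset P) :
    lowerClosure {a | Maximal (· ∈ S) a} = lowerClosure (S : Set P) := by
  refine le_antisymm (lowerClosure_mono fun a ha ↦ ha.prop) (lowerClosure_le.2 fun a ha ↦ ?_)
  obtain ⟨b, hab, hb⟩ := S.exists_le_maximal ha
  exact mem_lowerClosure.2 ⟨b, hb, hab⟩

theorem isDershowitzMannaLT_of_lowerClosure_lt {S T : Finset P}
    (hS : IsAntichain (· ≤ ·) (S : Set P))
    (hlt : lowerClosure (S : Set P) < lowerClosure (T : Set P)) :
    S.val.IsDershowitzMannaLT T.val := by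
  classical
  have val_eq_inter_add_sdiff (F G : Finset P) : F.val = (F ∩ G).val + (F \ G).val := by
    rw [Finset.inter_val, Finset.sdiff_val, add_comm, Multiset.sub_add_inter]
  refine ⟨(S ∩ T).val, (S \ T).val, (T \ S).val, ?_, val_eq_inter_add_sdiff S T, ?_, fun y hy ↦ ?_⟩
  · intro hempty
    have hTS : T ⊆ S := Finset.sdiff_eq_empty_iff_subset.1 (Finset.val_eq_zero.1 hempty)
    exact hlt.not_ge (lowerClosure_mono (Finset.coe_subset.2 hTS))
  · rw [Finset.inter_comm, ← val_eq_inter_add_sdiff T S]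
  · obtain ⟨hyS, hyT⟩ := Finset.mem_sdiff.1 hy
    obtain ⟨t, htT, hyt⟩ := mem_lowerClosure.1 (hlt.le (subset_lowerClosure hyS))
    have hne : y ≠ t := fun h ↦ hyT (h ▸ htT)
    have htS : t ∉ S := fun htS ↦ hS hyS htS hne hyt
    exact ⟨t, Finset.mem_sdiff.2 ⟨htT, htS⟩, lt_of_le_of_ne hyt hne⟩

theorem wellFounded_lowerClosure_lt [WellFoundedLT P] :
    WellFounded fun S T : Finset P ↦ lowerClosure (S : Set P) < lowerClosure (T : Set P) := by
  classical
  let maximals (S : Finset P) : Finset P := {a ∈ S | Maximal (· ∈ S) a}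
  have coe_maximals (S : Finset P) : (maximals S : Set P) = {a | Maximal (· ∈ S) a} := by
    ext a
    simpa [maximals] using Maximal.prop
  refine (InvImage.wf (fun S ↦ (maximals S).val)
    Multiset.wellFounded_isDershowitzMannaLT).mono fun S T hlt ↦
      isDershowitzMannaLT_of_lowerClosure_lt ?_ ?_
  · rw [coe_maximals]
    exact setOfPred_maximal_antichain _
  · rwa [coe_maximals, coe_maximals, lowerClosure_maximal, lowerClosure_maximal]

end LowerClosure

/-- `φ` is finitary (an algebraic closure operator): an element of a closure already lies in the
closure of a finite subset. This lets a possibly infinite space be treated through finite sets. -/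
def IsFinitary (φ : Set α → Set α) : Prop :=
  ∀ X : Set α, ∀ x ∈ φ X, ∃ F : Finset α, (F : Set α) ⊆ X ∧ x ∈ φ F

theorem IsFinitary.of_finite [Finite α] (φ : Set α → Set α) : IsFinitary φ :=
  fun X x hx ↦ ⟨X.toFinite.toFinset, by simp, by simpa using hx⟩

variable {φ : Set α → Set α} {x : α} {A B C : Set α}

theorem mem_binPart : x ∈ binPart φ A ↔ ∃ a ∈ A, x ∈ φ {a} := by
  simp only [binPart, mem_iUnion₂, exists_prop]

theorem binPart_mono (h : A ⊆ B) : binPart φ A ⊆ binPart φ B :=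
  biUnion_subset_biUnion_left h

theorem IsDGen.bMinSpanning (h : IsDGen φ x A) : BMinSpanning φ (φ A) A :=
  ⟨rfl, fun B hBA hspan ↦ h.2.2 B hBA (hspan ▸ h.1)⟩

namespace IsClosureOp

variable (hφ : IsClosureOp φ)
include hφ

theorem subset_closure_s4 (X : Set α) : X ⊆ φ X := hφ.1 X

theorem isClosedSet_closure_s4 (X : Set α) : IsClosedSet φ (φ X) := hφ.2.1 X

theorem monotone : Monotone φ := fun X Y ↦ hφ.2.2 X Y

theorem closure_subset_iff (hC : IsClosedSet φ C) : φ A ⊆ C ↔ A ⊆ C :=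
  ⟨(hφ.subset_closure_s4 A).trans, fun h ↦ (hφ.monotone h).trans hC.le⟩

theorem closure_singleton_subset_iff (hC : IsClosedSet φ C) : φ {x} ⊆ C ↔ x ∈ C :=
  (hφ.closure_subset_iff hC).trans singleton_subset_iff

theorem subset_binPart : A ⊆ binPart φ A :=
  fun a ha ↦ mem_binPart.2 ⟨a, ha, hφ.subset_closure_s4 {a} rfl⟩

theorem binPart_subset_iff (hC : IsClosedSet φ C) : binPart φ A ⊆ C ↔ A ⊆ C :=
  iUnion₂_subset_iff.trans (forall₂_congr fun _ _ ↦ hφ.closure_singleton_subset_iff hC)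

theorem binPart_subset_binPart_iff : binPart φ A ⊆ binPart φ B ↔ A ⊆ binPart φ B := by
  refine ⟨hφ.subset_binPart.trans, fun h ↦ iUnion₂_subset fun a ha ↦ ?_⟩
  obtain ⟨b, hb, hab⟩ := mem_binPart.1 (h ha)
  exact ((hφ.closure_singleton_subset_iff (hφ.isClosedSet_closure_s4 {b})).2 hab).trans
    (subset_biUnion_of_mem (u := fun b ↦ φ {b}) hb)

theorem closure_subset_closure_of_binPart_subset (h : binPart φ A ⊆ binPart φ B) :
    φ A ⊆ φ B := by
  have hB : IsClosedSet φ (φ B) := hφ.isClosedSet_closure_s4 B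
  exact (hφ.closure_subset_iff hB).2 <|
    (hφ.subset_binPart.trans h).trans ((hφ.binPart_subset_iff hB).2 (hφ.subset_closure_s4 B))

theorem notMem_closure_empty_of_ssubset (hx : x ∉ binPart φ A) (hBA : φ B ⊂ φ A) :
    x ∉ φ ∅ := by
  intro hx₀
  rcases A.eq_empty_or_nonempty with rfl | ⟨a, ha⟩
  · exact hBA.not_subset (hφ.monotone (empty_subset B))
  · exact hx (mem_binPart.2 ⟨a, ha, hφ.monotone (empty_subset {a}) hx₀⟩)

theorem primeIn_iff :
    PrimeIn φ C x ↔ ∀ C₁ C₂, IsClosedSet φ C₁ → IsClosedSet φ C₂ → C₁ ⊆ C → C₂ ⊆ C →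
      x ∈ φ (C₁ ∪ C₂) → x ∈ C₁ ∨ x ∈ C₂ := by
  refine forall₄_congr fun C₁ C₂ h₁ h₂ ↦ ?_
  rw [hφ.closure_singleton_subset_iff h₁, hφ.closure_singleton_subset_iff h₂,
    hφ.closure_singleton_subset_iff (hφ.isClosedSet_closure_s4 _)]

theorem primeIn_of_forall_mem_binPart (h : ∀ B ⊆ C, x ∈ φ B → x ∈ binPart φ B) :
    PrimeIn φ C x := by
  refine hφ.primeIn_iff.2 fun C₁ C₂ h₁ h₂ h₁C h₂C hx ↦ ?_
  obtain ⟨a, ha, hxa⟩ := mem_binPart.1 (h _ (union_subset h₁C h₂C) hx)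
  exact ha.imp (fun ha ↦ (hφ.closure_singleton_subset_iff h₁).2 ha hxa)
    (fun ha ↦ (hφ.closure_singleton_subset_iff h₂).2 ha hxa)

theorem mem_binPart_of_primeIn_of_finset (hC : IsClosedSet φ C) (hprime : PrimeIn φ C x)
    (hx₀ : x ∉ φ ∅) (F : Finset α) (hFC : (F : Set α) ⊆ C) (hx : x ∈ φ F) :
    x ∈ binPart φ F := by
  classical
  induction F using Finset.induction_on with
  | empty => exact absurd (by simpa using hx) hx₀
  | insert a S _ ih =>
    rw [Finset.coe_insert] at hFC hx ⊢
    obtain ⟨haC, hSC⟩ := insert_subset_iff.1 hFC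
    have hinsert : insert a (S : Set α) ⊆ φ {a} ∪ φ S :=
      union_subset_union (hφ.subset_closure_s4 {a}) (hφ.subset_closure_s4 S)
    rcases hφ.primeIn_iff.1 hprime (φ {a}) (φ S) (hφ.isClosedSet_closure_s4 _)
      (hφ.isClosedSet_closure_s4 _) ((hφ.closure_singleton_subset_iff hC).2 haC)
      ((hφ.closure_subset_iff hC).2 hSC) (hφ.monotone hinsert hx) with hxa | hxS
    · exact mem_binPart.2 ⟨a, mem_insert a _, hxa⟩
    · exact binPart_mono (subset_insert a _) (ih hSC hxS)

theorem mem_binPart_of_primeIn (hfin : IsFinitary φ) (hC : IsClosedSet φ C)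
    (hprime : PrimeIn φ C x) (hx₀ : x ∉ φ ∅) (hBC : B ⊆ C) (hx : x ∈ φ B) :
    x ∈ binPart φ B := by
  obtain ⟨F, hFB, hxF⟩ := hfin B x hx
  exact binPart_mono hFB <|
    hφ.mem_binPart_of_primeIn_of_finset hC hprime hx₀ F (hFB.trans hBC) hxF

theorem wellFounded_binPart_ssubset (hwf : (range fun a ↦ φ {a}).IsWF) :
    WellFounded fun S T : Finset α ↦ binPart φ S ⊂ binPart φ T := by
  classical
  let principal (a : α) : range fun a ↦ φ {a} := ⟨φ {a}, mem_range_self a⟩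
  have : WellFoundedLT (range fun a ↦ φ {a}) := ⟨hwf⟩
  have lowerClosure_le_iff (S T : Set α) :
      lowerClosure (principal '' S) ≤ lowerClosure (principal '' T) ↔
        binPart φ S ⊆ binPart φ T := by
    rw [lowerClosure_le, hφ.binPart_subset_binPart_iff, image_subset_iff]
    refine forall₂_congr fun a _ ↦ ?_
    rw [mem_binPart, mem_preimage, SetLike.mem_coe, mem_lowerClosure, exists_mem_image]
    exact exists_congr fun b ↦ and_congr_right fun _ ↦
      hφ.closure_singleton_subset_iff (hφ.isClosedSet_closure_s4 {b})
  refine (InvImage.wf (fun S : Finset α ↦ S.image principal)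
    wellFounded_lowerClosure_lt).mono fun S T hlt ↦ ?_
  simp only [InvImage, Finset.coe_image]
  exact lt_iff_le_not_ge.2 ⟨(lowerClosure_le_iff S T).2 hlt.subset,
    fun h ↦ hlt.not_subset ((lowerClosure_le_iff T S).1 h)⟩

theorem exists_isDGen_binPart_subset (hfin : IsFinitary φ)
    (hwf : (range fun a ↦ φ {a}).IsWF) (hx : x ∈ φ B) (hxB : x ∉ binPart φ B) :
    ∃ D, IsDGen φ x D ∧ binPart φ D ⊆ binPart φ B := by
  obtain ⟨F, hFB, hxF⟩ := hfin B x hx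
  obtain ⟨D, ⟨hxD, hDB⟩, hmin⟩ := (hφ.wellFounded_binPart_ssubset hwf).has_min
    {S : Finset α | x ∈ φ S ∧ binPart φ S ⊆ binPart φ B} ⟨F, hxF, binPart_mono hFB⟩
  refine ⟨D, ⟨hxD, fun h ↦ hxB (hDB h), fun E hED hxE ↦ ?_⟩, hDB⟩
  obtain ⟨G, hGE, hxG⟩ := hfin E x hxE
  have hGD : binPart φ G ⊂ binPart φ D := (binPart_mono hGE).trans_ssubset hED
  exact hmin G ⟨hxG, hGD.subset.trans hDB⟩ hGD

end IsClosureOp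

theorem IsEGen.primeIn (hφ : IsClosureOp φ) (hfin : IsFinitary φ)
    (hwf : (range fun a ↦ φ {a}).IsWF) (hA : IsEGen φ x A) (hC : IsClosedSet φ C)
    (hCA : C ⊂ φ A) : PrimeIn φ C x := by
  refine hφ.primeIn_of_forall_mem_binPart fun B hBC hx ↦ by_contra fun hxB ↦ ?_
  obtain ⟨D, hD, hDB⟩ := hφ.exists_isDGen_binPart_subset hfin hwf hx hxB
  have hDC : φ D ⊆ C := (hφ.closure_subset_closure_of_binPart_subset hDB).trans <|
    (hφ.closure_subset_iff hC).2 hBC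
  exact hCA.not_subset ((hA.2 D hD (hDC.trans hCA.subset)).ge.trans hDC)

theorem isEGen_of_forall_mem_binPart (hφ : IsClosureOp φ) (hspan : BMinSpanning φ (φ A) A)
    (hx : x ∈ φ A) (hxA : x ∉ binPart φ A)
    (h : ∀ B, φ B ⊂ φ A → x ∈ φ B → x ∈ binPart φ B) : IsEGen φ x A := by
  refine ⟨⟨hx, hxA, fun B hBA hxB ↦ ?_⟩, fun B hB hBA ↦ ?_⟩
  · have hlt : φ B ⊂ φ A :=
      (hφ.closure_subset_closure_of_binPart_subset hBA.subset).ssubset_of_ne (hspan.2 B hBA)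
    exact hxA (hBA.subset (h B hlt hxB))
  · by_contra hne
    exact hB.2.1 (h B (hBA.ssubset_of_ne hne) hB.1)

theorem statement4_general (φ : Set α → Set α) (hφ : IsClosureOp φ) (hfin : IsFinitary φ)
    (hwf : (range fun a ↦ φ {a}).IsWF) (x : α) (A : Set α) :
    IsEGen φ x A ↔
      BMinSpanning φ (φ A) A ∧
      (x ∈ φ A ∧ x ∉ binPart φ A) ∧
      ∀ C : Set α, IsClosedSet φ C → C ⊂ φ A → x ∈ C → PrimeIn φ C x := by
  constructor
  · intro hA
    exact ⟨hA.1.bMinSpanning, ⟨hA.1.1, hA.1.2.1⟩,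
      fun C hC hCA _ ↦ hA.primeIn hφ hfin hwf hC hCA⟩
  · rintro ⟨hspan, ⟨hx, hxA⟩, hprime⟩
    refine isEGen_of_forall_mem_binPart hφ hspan hx hxA fun B hBA hxB ↦ ?_
    have hB : IsClosedSet φ (φ B) := hφ.isClosedSet_closure_s4 B
    exact hφ.mem_binPart_of_primeIn hfin hB (hprime (φ B) hB hBA hxB)
      (hφ.notMem_closure_empty_of_ssubset hxA hBA) (hφ.subset_closure_s4 B) hxB

/-- characterization of E-generators. -/
theorem statement4 {α : Type*} [Fintype α] (φ : Set α → Set α)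
    (hφ : IsClosureOp φ) (hstd : IsStandard φ) (x : α) (A : Set α) :
    IsEGen φ x A ↔
      BMinSpanning φ (φ A) A ∧
      (x ∈ φ A ∧ x ∉ binPart φ A) ∧
      ∀ C : Set α, IsClosedSet φ C → C ⊂ φ A → x ∈ C → PrimeIn φ C x :=
  statement4_general φ hφ (IsFinitary.of_finite φ) (Set.toFinite _).isWF x A

end EBaseFormal
end

section
/- Let (U, φ) be a finite standard closure space, x ∈ U, and suppose C = φ(B) for some E-generator B of x. Then every φ^b-minimal spanning set A of C satisfying x ∉ φ^b(A) is an E-generator of x. -/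
/-!
Let `B` be an E-generator of `x`. A set `D` with `φ D ⊆ φ B` that spans `x`, but not through the
binary part, refines to a D-generator `E` of `x`, and `φ E ⊆ φ D ⊆ φ B` forces `φ E = φ B` by
minimality of `φ B`. So `D` spans `φ B`. Hence a proper refinement of a `φ^b`-minimal spanning set
of `φ B` cannot span `x`.
-/

namespace EBaseFormal

open Set

variable {α : Type*}

/-- `B` is a proper `φ^b`-refinement of `A`. Well-foundedness of this relation is the descending
chain condition under which D-generators exist. -/
def IsProperRefinement (φ : Set α → Set α) (B A : Set α) : Prop :=
  binPart φ B ⊂ binPart φ A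

section Generators

variable {φ : Set α → Set α} {x : α} {A B D : Set α}

theorem wellFounded_isProperRefinement [Finite α] (φ : Set α → Set α) :
    WellFounded (IsProperRefinement φ) :=
  InvImage.wf (binPart φ) wellFounded_lt

theorem IsClosureOp.subset_binPart_s6 (hφ : IsClosureOp φ) (A : Set α) : A ⊆ binPart φ A :=
  fun a ha => mem_biUnion ha (hφ.1 {a} rfl)

theorem IsClosureOp.binPart_subset (hφ : IsClosureOp φ) (A : Set α) : binPart φ A ⊆ φ A :=
  iUnion₂_subset fun _ ha => hφ.2.2 _ _ (singleton_subset_iff.mpr ha)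

theorem IsClosureOp.subset_of_binPart_subset (hφ : IsClosureOp φ)
    (h : binPart φ A ⊆ binPart φ B) : φ A ⊆ φ B :=
  calc φ A ⊆ φ (φ B) :=
        hφ.2.2 _ _ ((hφ.subset_binPart_s6 A).trans (h.trans (hφ.binPart_subset B)))
    _ = φ B := hφ.2.1 B

theorem exists_isDGen_of_mem (hwf : WellFounded (IsProperRefinement φ)) (hxD : x ∈ φ D)
    (hx : x ∉ binPart φ D) : ∃ E, IsDGen φ x E ∧ binPart φ E ⊆ binPart φ D := by
  induction D using hwf.induction with
  | _ D ih =>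
    by_cases hmin : ∀ F, binPart φ F ⊂ binPart φ D → x ∉ φ F
    · exact ⟨D, ⟨hxD, hx, hmin⟩, Subset.rfl⟩
    · push Not at hmin
      obtain ⟨F, hFD, hxF⟩ := hmin
      obtain ⟨E, hE, hEF⟩ := ih F hFD hxF fun h => hx (hFD.subset h)
      exact ⟨E, hE, hEF.trans hFD.subset⟩

theorem IsEGen.closure_eq_of_mem (hB : IsEGen φ x B) (hφ : IsClosureOp φ)
    (hwf : WellFounded (IsProperRefinement φ)) (hxD : x ∈ φ D) (hx : x ∉ binPart φ D)
    (hDB : φ D ⊆ φ B) : φ D = φ B := by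
  obtain ⟨E, hE, hED⟩ := exists_isDGen_of_mem hwf hxD hx
  have hφED : φ E ⊆ φ D := hφ.subset_of_binPart_subset hED
  have hφEB : φ E = φ B := hB.2 E hE (hφED.trans hDB)
  exact hDB.antisymm (hφEB ▸ hφED)

theorem IsEGen.of_isDGen_of_closure_eq (hB : IsEGen φ x B) (hA : IsDGen φ x A)
    (hAB : φ A = φ B) : IsEGen φ x A :=
  ⟨hA, fun D hD hDA => (hB.2 D hD (hAB ▸ hDA)).trans hAB.symm⟩

theorem BMinSpanning.isDGen (hA : BMinSpanning φ (φ B) A) (hB : IsEGen φ x B)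
    (hφ : IsClosureOp φ) (hwf : WellFounded (IsProperRefinement φ)) (hx : x ∉ binPart φ A) :
    IsDGen φ x A := by
  obtain ⟨hAB, hAmin⟩ := hA
  refine ⟨hAB ▸ hB.1.1, hx, fun D hDA hxD => hAmin D hDA ?_⟩
  have hφDB : φ D ⊆ φ B := hAB ▸ hφ.subset_of_binPart_subset hDA.subset
  exact hB.closure_eq_of_mem hφ hwf hxD (fun h => hx (hDA.subset h)) hφDB

theorem statement6_general (hφ : IsClosureOp φ) (hwf : WellFounded (IsProperRefinement φ))
    (hB : IsEGen φ x B) (hA : BMinSpanning φ (φ B) A) (hx : x ∉ binPart φ A) :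
    IsEGen φ x A :=
  hB.of_isDGen_of_closure_eq (hA.isDGen hB hφ hwf hx) hA.1

end Generators

/-- if `C` is the closure of some E-generator of `x`, then every
`φ^b`-minimal spanning set `A` of `C` with `x ∉ φ^b(A)` is an E-generator of `x`. -/
theorem statement6 {α : Type*} [Fintype α] (φ : Set α → Set α)
    (hφ : IsClosureOp φ) (hstd : IsStandard φ) (x : α) (B C A : Set α)
    (hB : IsEGen φ x B) (hC : C = φ B)
    (hA : BMinSpanning φ C A) (hx : x ∉ binPart φ A) :
    IsEGen φ x A :=
  statement6_general hφ (wellFounded_isProperRefinement φ) hB (hC ▸ hA) hx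

end EBaseFormal
end

section
/- Let (U, φ) be a finite standard closure space with modular closure lattice, and let C be a non-join-irreducible essential closed set with predecessors C_1, …, C_m and C_* = ⋂_{i=1}^m C_i. Then an element x ∈ C is almost prime in (↓C, ⊆) if and only if there exists a unique index i with C_i \ C_* = {x}. -/
namespace EBaseFormal

open Set

variable {α : Type*}

/-!
Everything rests on two consequences of the modular law. First, there is no pentagon: if
`A ⊆ B ⊆ A ∨ E` and `B ∩ E ⊆ A`, then `A = B`. Second, if `x` is prime in `↓L`, a closed `D ⊆ L` and
an arbitrary closed `K` that both avoid `x` have a join avoiding `x`, although `K` need not lie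
below `L`.

Let `x` be almost prime in `↓C`. By the second fact, predecessors above the two members of a
non-primality witness avoid `x`, which gives predecessors `C₁ ≠ C₂` of `C` avoiding `x`. If `L` is
a predecessor containing `x`, its closed subsets avoiding `x` lie in every predecessor avoiding
`x`, and excluding pentagons yields `C₁ ∩ C₂ ⊆ L`, then that `L` is the only predecessor containing
`x`, and finally, by standardness, that `L \ C_* = {x}`.

Conversely, `L \ C_* = {x}` makes `x` prime in `↓L`, and `L` is the only predecessor containing `x`.
If a quasi-closed set spanning `C` is not closed, two proper closed subsets cannot cover `C`. So `C`
has two further predecessors; both avoid `x` and their join is `C`, and `x` is not prime in `↓C`.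
-/

variable {φ : Set α → Set α} {A B C D E K L M N P : Set α} {x y : α}

theorem IsClosureOp.closure_subset (hφ : IsClosureOp φ) (hD : IsClosedSet φ D) (h : A ⊆ D) :
    φ A ⊆ D :=
  (hφ.2.2 A D h).trans_eq hD

theorem IsClosureOp.mem_closure_singleton (hφ : IsClosureOp φ) (x : α) : x ∈ φ {x} :=
  hφ.1 {x} rfl

theorem IsClosureOp.closure_singleton_subset_iff_s14 (hφ : IsClosureOp φ) (hD : IsClosedSet φ D) :
    φ {x} ⊆ D ↔ x ∈ D :=
  ⟨fun h => h (hφ.mem_closure_singleton x),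
    fun h => hφ.closure_subset hD (singleton_subset_iff.2 h)⟩

theorem IsClosureOp.closure_singleton_diff_ne (hφ : IsClosureOp φ) (x : α) :
    φ {x} \ {x} ≠ φ {x} :=
  fun h => (h.ge (hφ.mem_closure_singleton x)).2 rfl

theorem IsClosureOp.isClosedSet_sInter (hφ : IsClosureOp φ) {S : Set (Set α)}
    (hS : ∀ D ∈ S, IsClosedSet φ D) : IsClosedSet φ (⋂₀ S) :=
  Subset.antisymm
    (subset_sInter fun D hD => hφ.closure_subset (hS D hD) (sInter_subset_of_mem hD)) (hφ.1 _)

theorem IsClosureOp.isClosedSet_inter_s14 (hφ : IsClosureOp φ) (hA : IsClosedSet φ A)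
    (hB : IsClosedSet φ B) : IsClosedSet φ (A ∩ B) := by
  rw [← sInter_pair]
  exact hφ.isClosedSet_sInter (by rintro D (rfl | rfl) <;> assumption)

theorem Predecessor.closure_union_eq (hφ : IsClosureOp φ) (hK : Predecessor φ K C) (hD : D ⊆ C)
    (hDK : ¬ D ⊆ K) : φ (K ∪ D) = C := by
  have hKD : K ∪ D ⊆ φ (K ∪ D) := hφ.1 _
  refine hK.2.2.2 _ (hφ.2.1 _) ⟨subset_union_left.trans hKD, fun h => ?_⟩
    (hφ.closure_subset hK.2.1 (union_subset hK.2.2.1.subset hD))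
  exact hDK (subset_union_right.trans (hKD.trans h))

theorem Predecessor.eq_of_subset (hK : Predecessor φ K C) (hL : Predecessor φ L C) (h : K ⊆ L) :
    K = L := by
  by_contra hne
  exact hL.2.2.1.ne (hK.2.2.2 L hL.1 (h.ssubset_of_ne hne) hL.2.2.1.subset)

theorem Predecessor.closure_union_eq_of_ne (hφ : IsClosureOp φ) (hK : Predecessor φ K C)
    (hL : Predecessor φ L C) (hKL : K ≠ L) : φ (K ∪ L) = C :=
  hK.closure_union_eq hφ hL.2.2.1.subset fun h => hKL (hL.eq_of_subset hK h).symm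

/-- The lattice `(↓C, ⊆)` is coatomic: every closed proper subset of `C` lies below a predecessor
of `C`, as is automatic over a finite ground set. -/
def CoatomicBelow (φ : Set α → Set α) (C : Set α) : Prop :=
  ∀ D : Set α, IsClosedSet φ D → D ⊂ C → ∃ K : Set α, Predecessor φ K C ∧ D ⊆ K

theorem coatomicBelow_of_finite [Finite α] (hC : IsClosedSet φ C) : CoatomicBelow φ C := by
  intro D hD hDC
  obtain ⟨K, hDK, hK⟩ :=
    (toFinite {E : Set α | IsClosedSet φ E ∧ E ⊂ C}).exists_le_maximal ⟨hD, hDC⟩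
  refine ⟨K, ⟨hK.prop.1, hC, hK.prop.2, fun E hE hKE hEC => ?_⟩, hDK⟩
  by_contra hne
  exact hKE.2 (hK.le_of_ge ⟨hE, hEC.ssubset_of_ne hne⟩ hKE.subset)

/-- The intersection `C_*` of the predecessors of `C`. -/
def predecessorInter (φ : Set α → Set α) (C : Set α) : Set α :=
  ⋂₀ {D : Set α | Predecessor φ D C}

theorem Predecessor.predecessorInter_subset (hK : Predecessor φ K C) : predecessorInter φ C ⊆ K :=
  sInter_subset_of_mem hK

theorem IsClosureOp.isClosedSet_predecessorInter (hφ : IsClosureOp φ) (C : Set α) :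
    IsClosedSet φ (predecessorInter φ C) :=
  hφ.isClosedSet_sInter fun _ hD => hD.1

theorem primeIn_iff_mem (hφ : IsClosureOp φ) :
    PrimeIn φ C x ↔ ∀ A B : Set α, IsClosedSet φ A → IsClosedSet φ B → A ⊆ C → B ⊆ C →
      x ∈ φ (A ∪ B) → x ∈ A ∨ x ∈ B := by
  refine forall₄_congr fun A B hA hB => ?_
  rw [hφ.closure_singleton_subset_iff_s14 (hφ.2.1 (A ∪ B)), hφ.closure_singleton_subset_iff_s14 hA,
    hφ.closure_singleton_subset_iff_s14 hB]

theorem ModularLattice.closure_inter_union_eq (hmod : ModularLattice φ) (hA : IsClosedSet φ A)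
    (hB : IsClosedSet φ B) (hE : IsClosedSet φ E) (hAB : A ⊆ B) (hBE : B ⊆ φ (E ∪ A)) :
    φ (B ∩ E ∪ A) = B :=
  (hmod A B E hA hB hE hAB).trans (inter_eq_left.2 hBE)

theorem ModularLattice.eq_of_subset_of_inter_subset (hmod : ModularLattice φ)
    (hA : IsClosedSet φ A) (hB : IsClosedSet φ B) (hE : IsClosedSet φ E) (hAB : A ⊆ B)
    (hBE : B ⊆ φ (E ∪ A)) (hBEA : B ∩ E ⊆ A) : A = B :=
  calc
    A = φ A := Eq.symm hA
    _ = φ (B ∩ E ∪ A) := by rw [union_eq_right.2 hBEA]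
    _ = B := hmod.closure_inter_union_eq hA hB hE hAB hBE

theorem PrimeIn.notMem_closure_union (hφ : IsClosureOp φ) (hmod : ModularLattice φ)
    (hp : PrimeIn φ L x) (hL : IsClosedSet φ L) (hK : IsClosedSet φ K) (hD : IsClosedSet φ D)
    (hDL : D ⊆ L) (hxL : x ∈ L) (hxK : x ∉ K) (hxD : x ∉ D) : x ∉ φ (K ∪ D) := by
  intro hx
  have hx' : x ∈ φ (L ∩ K ∪ D) := hmod D L K hD hL hK hDL ▸ ⟨hxL, hx⟩
  rcases (primeIn_iff_mem hφ).1 hp (L ∩ K) D (hφ.isClosedSet_inter_s14 hL hK) hD inter_subset_left hDL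
    hx' with h | h
  · exact hxK h.2
  · exact hxD h

section UniquePredecessor

theorem PrimeIn.subset_predecessor (hφ : IsClosureOp φ) (hmod : ModularLattice φ)
    (hp : PrimeIn φ L x) (hL : IsClosedSet φ L) (hLC : L ⊆ C) (hK : Predecessor φ K C)
    (hxL : x ∈ L) (hxK : x ∉ K) (hD : IsClosedSet φ D) (hDL : D ⊆ L) (hxD : x ∉ D) : D ⊆ K := by
  by_contra hDK
  apply hp.notMem_closure_union hφ hmod hL hK.1 hD hDL hxL hxK hxD
  rw [hK.closure_union_eq hφ (hDL.trans hLC) hDK]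
  exact hLC hxL

theorem PrimeIn.inter_predecessor_subset (hφ : IsClosureOp φ) (hmod : ModularLattice φ)
    (hp : PrimeIn φ L x) (hL : IsClosedSet φ L) (hLC : L ⊆ C) (hM : IsClosedSet φ M)
    (hN : Predecessor φ N C) (hxL : x ∈ L) (hxM : x ∉ M) (hxN : x ∉ N) : L ∩ M ⊆ N :=
  hp.subset_predecessor hφ hmod hL hLC hN hxL hxN (hφ.isClosedSet_inter_s14 hL hM) inter_subset_left
    fun h => hxM h.2

theorem PrimeIn.predecessors_inter_subset (hφ : IsClosureOp φ) (hmod : ModularLattice φ)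
    (hp : PrimeIn φ L x) (hL : Predecessor φ L C) (hM : Predecessor φ M C)
    (hN : Predecessor φ N C) (hMN : M ≠ N) (hxL : x ∈ L) (hxM : x ∉ M) (hxN : x ∉ N) :
    M ∩ N ⊆ L := by
  by_contra hn
  have hspan : φ (L ∪ M ∩ N) = C :=
    hL.closure_union_eq hφ (inter_subset_left.trans hM.2.2.1.subset) hn
  have hML : M ∩ L ⊆ M ∩ N := subset_inter inter_subset_left
    (inter_comm M L ▸
      hp.inter_predecessor_subset hφ hmod hL.1 hL.2.2.1.subset hM.1 hN hxL hxM hxN)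
  have heq : M ∩ N = M := hmod.eq_of_subset_of_inter_subset (hφ.isClosedSet_inter_s14 hM.1 hN.1) hM.1
    hL.1 inter_subset_left (hspan ▸ hM.2.2.1.subset) hML
  exact hMN (hM.eq_of_subset hN (inter_eq_left.1 heq))

theorem PrimeIn.predecessor_eq (hφ : IsClosureOp φ) (hmod : ModularLattice φ)
    (hpK : PrimeIn φ K x) (hpL : PrimeIn φ L x) (hK : Predecessor φ K C) (hL : Predecessor φ L C)
    (hM : Predecessor φ M C) (hN : Predecessor φ N C) (hMN : M ≠ N) (hxK : x ∈ K) (hxL : x ∈ L)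
    (hxM : x ∉ M) (hxN : x ∉ N) : K = L := by
  have hspan : φ (M ∪ K ∩ L) = C :=
    hM.closure_union_eq hφ (inter_subset_left.trans hK.2.2.1.subset) fun h => hxM (h ⟨hxK, hxL⟩)
  have hKM : K ∩ M ⊆ L :=
    calc
      K ∩ M ⊆ M ∩ N := subset_inter inter_subset_right
        (hpK.inter_predecessor_subset hφ hmod hK.1 hK.2.2.1.subset hM.1 hN hxK hxM hxN)
      _ ⊆ L := hpL.predecessors_inter_subset hφ hmod hL hM hN hMN hxL hxM hxN
  have heq : K ∩ L = K := hmod.eq_of_subset_of_inter_subset (hφ.isClosedSet_inter_s14 hK.1 hL.1) hK.1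
    hM.1 inter_subset_left (hspan ▸ hK.2.2.1.subset) (subset_inter inter_subset_left hKM)
  exact hK.eq_of_subset hL (inter_eq_left.1 heq)

end UniquePredecessor

section Standard

theorem Predecessor.eq_closure_singleton_diff (hφ : IsClosureOp φ) (hstd : IsStandard φ)
    (hK : Predecessor φ K (φ {y})) : K = φ {y} \ {y} := by
  have hyK : y ∉ K := fun h => hK.2.2.1.not_subset ((hφ.closure_singleton_subset_iff_s14 hK.1).2 h)
  by_contra hne
  exact hφ.closure_singleton_diff_ne y (hK.2.2.2 _ (hstd y)
    ((subset_sdiff_singleton hK.2.2.1.subset hyK).ssubset_of_ne hne) sdiff_subset)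

theorem CoatomicBelow.exists_predecessor_mem (hφ : IsClosureOp φ) (hstd : IsStandard φ)
    (hco : CoatomicBelow φ C) (hK : Predecessor φ K C) (hL : Predecessor φ L C) (hKL : K ≠ L)
    (hy : y ∈ C) : ∃ M, Predecessor φ M C ∧ y ∈ M := by
  have hne : φ {y} ≠ C := by
    rintro rfl
    exact hKL ((hK.eq_closure_singleton_diff hφ hstd).trans
      (hL.eq_closure_singleton_diff hφ hstd).symm)
  obtain ⟨M, hM, hyM⟩ := hco (φ {y}) (hφ.2.1 _)
    (((hφ.closure_singleton_subset_iff_s14 hK.2.1).2 hy).ssubset_of_ne hne)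
  exact ⟨M, hM, (hφ.closure_singleton_subset_iff_s14 hM.1).1 hyM⟩

theorem Predecessor.closure_singleton_diff_subset (hφ : IsClosureOp φ) (hstd : IsStandard φ)
    (hmod : ModularLattice φ) (hK : Predecessor φ K C) (hy : y ∈ C) (hyK : y ∉ K) :
    φ {y} \ {y} ⊆ K := by
  by_contra hn
  have hyC : φ {y} ⊆ C := (hφ.closure_singleton_subset_iff_s14 hK.2.1).2 hy
  have hspan : φ (K ∪ φ {y} \ {y}) = C := hK.closure_union_eq hφ (sdiff_subset.trans hyC) hn
  exact hφ.closure_singleton_diff_ne y (hmod.eq_of_subset_of_inter_subset (hstd y) (hφ.2.1 _) hK.1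
    sdiff_subset (hspan ▸ hyC) (subset_sdiff_singleton inter_subset_left fun h => hyK h.2))

theorem PrimeIn.subset_insert_predecessor (hφ : IsClosureOp φ) (hstd : IsStandard φ)
    (hmod : ModularLattice φ) (hp : PrimeIn φ L x) (hL : IsClosedSet φ L) (hLC : L ⊆ C)
    (hK : Predecessor φ K C) (hxL : x ∈ L) (hxK : x ∉ K) : L ⊆ insert x K := by
  intro y hyL
  by_contra hn
  obtain ⟨hyx, hyK⟩ : y ≠ x ∧ y ∉ K := not_or.1 hn
  have hxy : x ∉ φ {y} := fun h =>
    hxK (hK.closure_singleton_diff_subset hφ hstd hmod (hLC hyL) hyK ⟨h, hyx.symm⟩)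
  exact hyK (hp.subset_predecessor hφ hmod hL hLC hK hxL hxK (hφ.2.1 _)
    ((hφ.closure_singleton_subset_iff_s14 hL).2 hyL) hxy (hφ.mem_closure_singleton y))

end Standard

section AlmostPrime

theorem AlmostPrimeIn.exists_ne_predecessors_notMem (hφ : IsClosureOp φ)
    (hmod : ModularLattice φ) (hco : CoatomicBelow φ C) (hx : AlmostPrimeIn φ C x) :
    ∃ M N, Predecessor φ M C ∧ Predecessor φ N C ∧ M ≠ N ∧ x ∉ M ∧ x ∉ N := by
  obtain ⟨hxC, hnp, hprime⟩ := hx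
  rw [primeIn_iff_mem hφ] at hnp
  push Not at hnp
  obtain ⟨A, B, hA, hB, hAC, hBC, hxAB, hxA, hxB⟩ := hnp
  obtain ⟨M, hM, hAM⟩ := hco A hA (hAC.ssubset_of_mem_notMem hxC hxA)
  obtain ⟨N, hN, hBN⟩ := hco B hB (hBC.ssubset_of_mem_notMem hxC hxB)
  have hxM : x ∉ M := fun h => (hprime M hM h).notMem_closure_union hφ hmod hM.1 hB hA hAM h hxB
    hxA (union_comm A B ▸ hxAB)
  have hxN : x ∉ N := fun h => (hprime N hN h).notMem_closure_union hφ hmod hN.1 hA hB hBN h hxA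
    hxB hxAB
  refine ⟨M, N, hM, hN, ?_, hxM, hxN⟩
  rintro rfl
  exact hxM (hφ.closure_subset hM.1 (union_subset hAM hBN) hxAB)

theorem AlmostPrimeIn.exists_predecessor_diff_eq (hφ : IsClosureOp φ) (hstd : IsStandard φ)
    (hmod : ModularLattice φ) (hco : CoatomicBelow φ C) (hx : AlmostPrimeIn φ C x) :
    ∃ L, Predecessor φ L C ∧ L \ predecessorInter φ C = {x} := by
  obtain ⟨M, N, hM, hN, hMN, hxM, hxN⟩ := hx.exists_ne_predecessors_notMem hφ hmod hco
  obtain ⟨hxC, -, hprime⟩ := hx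
  obtain ⟨L, hL, hxL⟩ := hco.exists_predecessor_mem hφ hstd hM hN hMN hxC
  have huniq : ∀ K, Predecessor φ K C → x ∈ K → K = L := fun K hK hxK =>
    (hprime K hK hxK).predecessor_eq hφ hmod (hprime L hL hxL) hK hL hM hN hMN hxK hxL hxM hxN
  refine ⟨L, hL, Subset.antisymm ?_ (singleton_subset_iff.2 ⟨hxL, fun h =>
    hxM (hM.predecessorInter_subset h)⟩)⟩
  rintro y ⟨hyL, hy⟩
  by_contra hyx
  refine hy (mem_sInter.2 fun K (hK : Predecessor φ K C) => ?_)
  by_cases hxK : x ∈ K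
  · exact huniq K hK hxK ▸ hyL
  · have hLK : L ⊆ insert x K := (hprime L hL hxL).subset_insert_predecessor hφ hstd hmod hL.1
      hL.2.2.1.subset hK hxL hxK
    exact (hLK hyL).resolve_left hyx

end AlmostPrime

section QuasiClosed

theorem QuasiClosed.isClosedSet_inter_s14 (hφ : IsClosureOp φ) (hP : QuasiClosed φ P)
    (hM : IsClosedSet φ M) (hMP : M ⊂ φ P) : IsClosedSet φ (P ∩ M) := by
  have hle : φ (P ∩ M) ⊆ M := hφ.closure_subset hM inter_subset_right
  exact Subset.antisymm (subset_inter (hP _ inter_subset_left (hle.trans_ssubset hMP)) hle)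
    (hφ.1 _)

theorem QuasiClosed.subset_of_subset_union (hφ : IsClosureOp φ) (hmod : ModularLattice φ)
    (hP : QuasiClosed φ P) (hM : IsClosedSet φ M) (hN : IsClosedSet φ N) (hMP : M ⊂ φ P)
    (hNP : N ⊂ φ P) (hcover : P ⊆ M ∪ N) : M ⊆ P := by
  have hunion : P ∩ N ∪ P ∩ M = P := by
    rw [← inter_union_distrib_left, union_comm, inter_eq_left.2 hcover]
  have heq : P ∩ M = M := hmod.eq_of_subset_of_inter_subset (hP.isClosedSet_inter_s14 hφ hM hMP) hM
    (hP.isClosedSet_inter_s14 hφ hN hNP) inter_subset_right (hunion.symm ▸ hMP.subset)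
    fun _ h => ⟨h.2.1, h.1⟩
  exact inter_eq_right.1 heq

theorem QuasiClosed.isClosedSet_of_closure_subset_union (hφ : IsClosureOp φ)
    (hmod : ModularLattice φ) (hP : QuasiClosed φ P) (hM : IsClosedSet φ M)
    (hN : IsClosedSet φ N) (hMP : M ⊂ φ P) (hNP : N ⊂ φ P) (hcover : φ P ⊆ M ∪ N) :
    IsClosedSet φ P := by
  have hPMN : P ⊆ M ∪ N := (hφ.1 P).trans hcover
  have hMsub : M ⊆ P := hP.subset_of_subset_union hφ hmod hM hN hMP hNP hPMN
  have hNsub : N ⊆ P := hP.subset_of_subset_union hφ hmod hN hM hNP hMP (union_comm M N ▸ hPMN)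
  exact Subset.antisymm (hcover.trans (union_subset hMsub hNsub)) (hφ.1 P)

theorem Essential.exists_predecessor_ne_ne (hφ : IsClosureOp φ) (hstd : IsStandard φ)
    (hmod : ModularLattice φ) (hess : Essential φ C) (hco : CoatomicBelow φ C)
    (hK : Predecessor φ K C) (hL : Predecessor φ L C) (hKL : K ≠ L) :
    ∃ M, Predecessor φ M C ∧ M ≠ K ∧ M ≠ L := by
  obtain ⟨-, P, ⟨hPnot, hP, -⟩, rfl⟩ := hess
  obtain ⟨y, hyP, hy⟩ := not_subset.1 fun hcover =>
    hPnot (hP.isClosedSet_of_closure_subset_union hφ hmod hK.1 hL.1 hK.2.2.1 hL.2.2.1 hcover)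
  obtain ⟨M, hM, hyM⟩ := hco.exists_predecessor_mem hφ hstd hK hL hKL hyP
  refine ⟨M, hM, ?_, ?_⟩
  · rintro rfl
    exact hy (Or.inl hyM)
  · rintro rfl
    exact hy (Or.inr hyM)

end QuasiClosed

section DifferenceSingleton

theorem Predecessor.not_primeIn (hφ : IsClosureOp φ) (hM : Predecessor φ M C)
    (hN : Predecessor φ N C) (hMN : M ≠ N) (hx : x ∈ C) (hxM : x ∉ M) (hxN : x ∉ N) :
    ¬ PrimeIn φ C x := by
  rw [primeIn_iff_mem hφ]
  intro hp
  have hxMN : x ∈ φ (M ∪ N) := (hM.closure_union_eq_of_ne hφ hN hMN).symm ▸ hx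
  exact (hp M N hM.1 hN.1 hM.2.2.1.subset hN.2.2.1.subset hxMN).elim hxM hxN

theorem primeIn_of_diff_eq_singleton (hφ : IsClosureOp φ) (hE : IsClosedSet φ E)
    (hLE : L \ E = {x}) : PrimeIn φ L x := by
  rw [primeIn_iff_mem hφ]
  intro A B _ _ hAL hBL hx
  have hxE : x ∉ E := (hLE.symm ▸ rfl : x ∈ L \ E).2
  have hsub : ∀ D ⊆ L, x ∉ D → D ⊆ E := fun D hDL hxD y hy => by
    by_contra hyE
    have hyx : y = x := hLE.subset ⟨hDL hy, hyE⟩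
    exact hxD (hyx ▸ hy)
  by_contra! hn
  exact hxE (hφ.closure_subset hE (union_subset (hsub A hAL hn.1) (hsub B hBL hn.2)) hx)

theorem Predecessor.eq_of_diff_predecessorInter_eq (hL : Predecessor φ L C)
    (hLx : L \ predecessorInter φ C = {x}) (hK : Predecessor φ K C) (hxK : x ∈ K) : K = L := by
  refine (hL.eq_of_subset hK ?_).symm
  rw [← sdiff_union_inter L (predecessorInter φ C), hLx]
  exact union_subset (singleton_subset_iff.2 hxK)
    (inter_subset_right.trans hK.predecessorInter_subset)

theorem Essential.almostPrimeIn_of_diff_eq (hφ : IsClosureOp φ) (hstd : IsStandard φ)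
    (hmod : ModularLattice φ) (hess : Essential φ C) (hco : CoatomicBelow φ C)
    (hL : Predecessor φ L C) (hLx : L \ predecessorInter φ C = {x}) : AlmostPrimeIn φ C x := by
  have hx : x ∈ L \ predecessorInter φ C := hLx.symm ▸ rfl
  have huniq : ∀ K, Predecessor φ K C → x ∈ K → K = L := fun _ =>
    hL.eq_of_diff_predecessorInter_eq hLx
  obtain ⟨M, hM, hxM⟩ : ∃ M, Predecessor φ M C ∧ x ∉ M := by
    by_contra! h
    exact hx.2 (mem_sInter.2 h)
  obtain ⟨N, hN, hNL, hNM⟩ := hess.exists_predecessor_ne_ne hφ hstd hmod hco hL hM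
    fun h => hxM (h ▸ hx.1)
  have hxN : x ∉ N := fun h => hNL (huniq N hN h)
  have hxC : x ∈ C := hL.2.2.1.subset hx.1
  refine ⟨hxC, hM.not_primeIn hφ hN hNM.symm hxC hxM hxN, fun K hK hxK => ?_⟩
  rw [huniq K hK hxK]
  exact primeIn_of_diff_eq_singleton hφ (hφ.isClosedSet_predecessorInter C) hLx

end DifferenceSingleton

theorem statement14_general (hφ : IsClosureOp φ) (hstd : IsStandard φ) (hmod : ModularLattice φ)
    (hess : Essential φ C) (hco : CoatomicBelow φ C) :
    AlmostPrimeIn φ C x ↔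
      ∃! L : Set α, Predecessor φ L C ∧ L \ predecessorInter φ C = {x} := by
  constructor
  · intro hx
    obtain ⟨L, hL, hLx⟩ := hx.exists_predecessor_diff_eq hφ hstd hmod hco
    refine ⟨L, ⟨hL, hLx⟩, fun K hK => hL.eq_of_diff_predecessorInter_eq hLx hK.1 ?_⟩
    exact (hK.2.symm ▸ rfl : x ∈ K \ predecessorInter φ C).1
  · rintro ⟨L, ⟨hL, hLx⟩, -⟩
    exact hess.almostPrimeIn_of_diff_eq hφ hstd hmod hco hL hLx

/-- in a modular closure space, for a non-join-irreducible essential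
set `C` with predecessor intersection `C_*`, an element `x ∈ C` is almost prime in
`(↓C, ⊆)` iff there is a unique predecessor `C'` of `C` with `C' \ C_* = {x}`. -/
theorem statement14 {α : Type*} [Fintype α] (φ : Set α → Set α)
    (hφ : IsClosureOp φ) (hstd : IsStandard φ) (hmod : ModularLattice φ)
    (C : Set α) (hess : Essential φ C) (hnji : ¬ JoinIrredUP φ C)
    (x : α) (hx : x ∈ C) :
    AlmostPrimeIn φ C x ↔
      ∃! C' : Set α, Predecessor φ C' C ∧
        C' \ ⋂₀ {D : Set α | Predecessor φ D C} = {x} :=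
  statement14_general hφ hstd hmod hess (coatomicBelow_of_finite hess.1)

end EBaseFormal
end
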